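/- Let k be a field, R a k-algebra with k-algebra automorphism σ, and let T, U be finite-dimensional k-subspaces of R such that 1 ∈ U, σ^i(U) is contained in the center of R for all i ≥ 0, and T·σ(T) ⊆ U·T. Then for all n ≥ 1, T·σ(T)·σ²(T)···σ^{n-1}(T) ⊆ T·U·σ(U)···σ^{n-1}(U). (Induction claim in the proof of Proposition 2.5.) -/

import Mathlib

/-!
The argument proves the sharper inclusion `T·σ(T)⋯σⁿ(T) ⊆ T·U·σ(U)⋯σ^{n-1}(U)`, with one fewer
factor on the right, by induction on `n`. Writing `P_n`, `Q_n` for the twisted products of `T`, `U`,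
peeling off the leftmost factor gives `P_{n+1} = T·σ(P_n)` (`twistProd_succ_left`), whence
`P_{n+2} = T·σ(P_{n+1}) ⊆ T·σ(T)·σ(Q_n) ⊆ U·T·σ(Q_n) ⊆ T·U·σ(Q_n) = T·Q_{n+1}`,
where the last inclusion holds because `U` is central. The stated bound follows because
`1 ∈ σⁿ(U)` gives `Q_n ⊆ Q_{n+1}`.
-/

/-- The twisted product `T·σ(T)·σ²(T)⋯σ^{n-1}(T)` of a subspace `T ⊆ R`. -/
noncomputable def twistProd {k R : Type*} [Field k] [Ring R] [Algebra k R]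
    (σ : R ≃ₐ[k] R) (T : Submodule k R) : ℕ → Submodule k R
  | 0 => 1
  | n + 1 => twistProd σ T n * Submodule.map (σ ^ n : R ≃ₐ[k] R).toLinearMap T

/-- Peels off the leftmost factor of the twisted product, whereas the definition peels off the
rightmost one. -/
theorem twistProd_succ_left {k R : Type*} [Field k] [Ring R] [Algebra k R]
    (σ : R ≃ₐ[k] R) (T : Submodule k R) (n : ℕ) :
    twistProd σ T (n + 1) = T * Submodule.map σ.toLinearMap (twistProd σ T n) := by
  induction n with
  | zero =>
    have h1 : Submodule.map σ.toLinearMap (1 : Submodule k R) = 1 :=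
      Submodule.map_one (σ : R →ₐ[k] R)
    have h2 : Submodule.map (σ ^ 0 : R ≃ₐ[k] R).toLinearMap T = T := by
      ext x; simp
    simp only [twistProd, h1, h2, one_mul, mul_one]
  | succ n ih =>
    have hmul : ∀ A B : Submodule k R, Submodule.map σ.toLinearMap (A * B)
        = Submodule.map σ.toLinearMap A * Submodule.map σ.toLinearMap B :=
      fun A B => Submodule.map_mul A B (σ : R →ₐ[k] R)
    have hpow : Submodule.map (σ ^ (n + 1) : R ≃ₐ[k] R).toLinearMap T
        = Submodule.map σ.toLinearMap (Submodule.map (σ ^ n : R ≃ₐ[k] R).toLinearMap T) := by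
      rw [← Submodule.map_comp, pow_succ']
      rfl
    calc twistProd σ T (n + 1 + 1)
        = twistProd σ T (n + 1) * Submodule.map (σ ^ (n + 1) : R ≃ₐ[k] R).toLinearMap T := rfl
      _ = T * Submodule.map σ.toLinearMap
            (twistProd σ T n * Submodule.map (σ ^ n : R ≃ₐ[k] R).toLinearMap T) := by
          rw [ih, hpow, mul_assoc, ← hmul]
      _ = T * Submodule.map σ.toLinearMap (twistProd σ T (n + 1)) := rfl

/-- The sharper inclusion, with one factor fewer on the right-hand side. -/
theorem twistProd_succ_le {k R : Type*} [Field k] [Ring R] [Algebra k R]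
    (σ : R ≃ₐ[k] R) (T U : Submodule k R) (hcent : ∀ x ∈ U, x ∈ Set.center R)
    (hTU : T * Submodule.map σ.toLinearMap T ≤ U * T) (n : ℕ) :
    twistProd σ T (n + 1) ≤ T * twistProd σ U n := by
  have hUT : U * T ≤ T * U := Submodule.mul_le.2 fun u hu t ht => by
    rw [((Set.mem_center_iff.1 (hcent u hu)).comm t).eq]
    exact Submodule.mul_mem_mul ht hu
  induction n with
  | zero =>
    rw [twistProd_succ_left]
    exact mul_le_mul_right (Submodule.map_one (σ : R →ₐ[k] R)).le T
  | succ n ih =>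
    have hmap : Submodule.map σ.toLinearMap (T * twistProd σ U n)
        = Submodule.map σ.toLinearMap T * Submodule.map σ.toLinearMap (twistProd σ U n) :=
      Submodule.map_mul _ _ (σ : R →ₐ[k] R)
    calc twistProd σ T (n + 1 + 1)
        = T * Submodule.map σ.toLinearMap (twistProd σ T (n + 1)) := twistProd_succ_left σ T _
      _ ≤ T * Submodule.map σ.toLinearMap (T * twistProd σ U n) :=
          mul_le_mul' le_rfl (Submodule.map_mono ih)
      _ = T * Submodule.map σ.toLinearMap T * Submodule.map σ.toLinearMap (twistProd σ U n) := by
          rw [hmap, mul_assoc]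
      _ ≤ T * U * Submodule.map σ.toLinearMap (twistProd σ U n) :=
          mul_le_mul' (hTU.trans hUT) le_rfl
      _ = T * twistProd σ U (n + 1) := by rw [mul_assoc, ← twistProd_succ_left]

/-- Induction claim in the proof of Proposition 2.5. -/
theorem twistProd_le_of_central (k R : Type*) [Field k] [Ring R] [Algebra k R]
    (σ : R ≃ₐ[k] R) (T U : Submodule k R)
    (hT : FiniteDimensional k T) (hU : FiniteDimensional k U)
    (hone : (1 : R) ∈ U)
    (hcent : ∀ i : ℕ, ∀ x ∈ U, (σ ^ i : R ≃ₐ[k] R) x ∈ Set.center R)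
    (hTU : T * Submodule.map σ.toLinearMap T ≤ U * T) :
    ∀ n : ℕ, 1 ≤ n → twistProd σ T n ≤ T * twistProd σ U n := by
  intro n hn
  obtain ⟨m, rfl⟩ : ∃ m, n = m + 1 := ⟨n - 1, by omega⟩
  have hc : ∀ x ∈ U, x ∈ Set.center R := fun x hx => by simpa using hcent 0 x hx
  have h1 : (1 : Submodule k R) ≤ Submodule.map (σ ^ m : R ≃ₐ[k] R).toLinearMap U :=
    Submodule.one_le.2 ⟨1, hone, map_one (σ ^ m : R ≃ₐ[k] R)⟩
  have hQ : twistProd σ U m ≤ twistProd σ U (m + 1) := by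
    calc twistProd σ U m = twistProd σ U m * 1 := (mul_one _).symm
      _ ≤ twistProd σ U (m + 1) := mul_le_mul' le_rfl h1
  exact (twistProd_succ_le σ T U hc hTU m).trans (mul_le_mul' le_rfl hQ)
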